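/- Let g be a positive integer. There exist constants C = C(g) > 0 and κ = κ(g) > 0 with the following property: for every M ∈ M_{2g}(ℤ) with det M ≠ 0, setting H to be the maximum of the affine heights of the entries of the matrix Mᵗ J M, where J = [[0, E_g], [−E_g, 0]] is the standard symplectic form, there exist matrices S ∈ Sp_{2g}(ℤ) and P ∈ M_{2g}(ℤ) such that M = SP and every entry of P has affine height at most C·max(1,H)^κ. -/

import Mathlib

/-!
Write `ω` for the form with matrix `J` and `x_j` for the columns of `M`, so that `MᵗJM` is the Gram
matrix of the `x_j`. If `e_i, f_i` is a symplectic basis of `ℤ ^ (2g)`, the matrix `S` with these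
columns is symplectic, and the entries of `P = S⁻¹M` are, up to sign, the pairings `ω(e_i, x_j)` and
`ω(f_i, x_j)`. So a symplectic basis is needed whose pairings with the `x_j` are polynomially bounded
in the Gram matrix. This is proved by induction for sublattices `L` on which `ω` is unimodular
(`exists_bounded_basis`).

Pick `a, b` with `c₀ = ω(x_a, x_b) ≠ 0`. By unimodularity `x_a = d p` with `ω(p, q) = 1` for some
`q` in `L`, and `d`, `c = ω(p, x_b)` are bounded because `d c = c₀`. The vectors
`y_k = c₀ x_k - ω(x_a, x_k) x_b + ω(x_b, x_k) x_a` are orthogonal to `x_a` and `x_b`; projected to the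
complement of `p, q` they have bounded Gram matrix, and at least two of them vanish, so induction
gives a good symplectic basis of that complement. It extends by `p, q` to a basis of `L`, and the
automorphisms of `L` fixing `p` allow the pairings with `x_b` to be reduced modulo `c`
(`IsSympBasis.cons`, `exists_shift`). The only pairings still to be controlled are those of the new
partner of `p` with the `y_k`; expanding `ω(x_b, y_k) = 0` in the new basis (Parseval) expresses
each of them as a bounded sum divided by `c`. Finally `x_k` is recovered from `y_k, x_a, x_b` on
division by `c₀`.
-/

open Matrix

/-- The standard symplectic form matrix `J = [[0, E_g], [-E_g, 0]]`. -/
def Jsymp (g : ℕ) : Matrix (Fin g ⊕ Fin g) (Fin g ⊕ Fin g) ℤ :=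
  Matrix.fromBlocks 0 1 (-1) 0

/-! ### Unimodular alternating forms and symplectic bases -/

/-- Every element of `L` whose pairings with `L` are all divisible by `d ≠ 0` is itself divisible
by `d` in `L`. For a lattice with a nondegenerate form this says that the form is unimodular. -/
def UnimodularOn {V : Type} [AddCommGroup V] (ω : LinearMap.BilinForm ℤ V)
    (L : Submodule ℤ V) : Prop :=
  ∀ d : ℤ, d ≠ 0 → ∀ x ∈ L, (∀ y ∈ L, d ∣ ω x y) → ∃ r ∈ L, x = d • r

/-- `e, f` are the two halves of a symplectic family in `L`, and only `0` in `L` is orthogonal to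
all of it (so that the family is a symplectic basis of `L`). -/
structure IsSympBasis {V : Type} [AddCommGroup V] (ω : LinearMap.BilinForm ℤ V)
    (L : Submodule ℤ V) {n : ℕ} (e f : Fin n → V) : Prop where
  mem_e : ∀ i, e i ∈ L
  mem_f : ∀ i, f i ∈ L
  ee : ∀ i j, ω (e i) (e j) = 0
  ff : ∀ i j, ω (f i) (f j) = 0
  ef : ∀ i j, ω (e i) (f j) = if i = j then 1 else 0
  total : ∀ y ∈ L, (∀ i, ω (e i) y = 0) → (∀ i, ω (f i) y = 0) → y = 0

theorem alt_swap {V : Type} [AddCommGroup V] {ω : LinearMap.BilinForm ℤ V}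
    (hω : ∀ x, ω x x = 0) (x y : V) : ω y x = -ω x y := by
  have h := hω (x + y)
  simp only [map_add, LinearMap.add_apply, hω] at h
  linarith

/-- Parseval's identity for a symplectic basis. -/
theorem IsSympBasis.parseval {V : Type} [AddCommGroup V] {ω : LinearMap.BilinForm ℤ V}
    (hω : ∀ x, ω x x = 0) {L : Submodule ℤ V} {n : ℕ} {e f : Fin n → V}
    (h : IsSympBasis ω L e f) {x : V} (hx : x ∈ L) (y : V) :
    ω x y = ∑ i, (ω (e i) x * ω (f i) y - ω (f i) x * ω (e i) y) := by
  have hfe : ∀ i j, ω (f i) (e j) = if i = j then -1 else 0 := by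
    intro i j
    rw [alt_swap hω, h.ef]
    by_cases hij : i = j
    · simp [hij]
    · simp [hij, Ne.symm hij]
  have h0 : x - ∑ i, (ω (e i) x • f i - ω (f i) x • e i) = 0 := by
    apply h.total
    · exact L.sub_mem hx (L.sum_mem fun i _ =>
        L.sub_mem (L.smul_mem _ (h.mem_f i)) (L.smul_mem _ (h.mem_e i)))
    · intro j
      simp [h.ef, h.ee]
    · intro j
      simp [h.ff, hfe]
  rw [sub_eq_zero] at h0
  conv_lhs => rw [h0]
  simp

/-- Shifting by a multiple of `c` makes an integer at most `|c|` in absolute value. -/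
theorem exists_shift (a c : ℤ) (hc : c ≠ 0) : ∃ k : ℤ, |a + k * c| ≤ |c| := by
  refine ⟨-(a / c), ?_⟩
  have h1 := Int.emod_nonneg a hc
  have h2 := Int.emod_lt_abs a hc
  have h3 := Int.emod_add_mul_ediv a c
  have : a + -(a / c) * c = a % c := by linarith
  rw [this, abs_of_nonneg h1]
  exact h2.le

/-- An element `m` of a unimodular lattice with a nonzero pairing is a multiple of an element
`p` that is the first half of a hyperbolic pair `p, q`. -/
theorem UnimodularOn.exists_hyperbolic {V : Type} [AddCommGroup V]
    {ω : LinearMap.BilinForm ℤ V} {L : Submodule ℤ V} (hL : UnimodularOn ω L)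
    {m w : V} (hm : m ∈ L) (hw : w ∈ L) (hmw : ω m w ≠ 0) :
    ∃ d : ℤ, ∃ p ∈ L, ∃ q ∈ L, d ≠ 0 ∧ m = d • p ∧ ω p q = 1 := by
  obtain ⟨d, hd⟩ := (IsPrincipalIdealRing.principal (L.map (ω m) : Ideal ℤ)).principal
  have hdiv : ∀ y ∈ L, d ∣ ω m y := by
    intro y hy
    have : ω m y ∈ L.map (ω m) := Submodule.mem_map_of_mem hy
    rw [hd] at this
    exact Ideal.mem_span_singleton.1 this
  have hd0 : d ≠ 0 := by
    rintro rfl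
    exact hmw (zero_dvd_iff.1 (hdiv w hw))
  have hdm : d ∈ L.map (ω m) := by
    rw [hd]; exact Submodule.mem_span_singleton_self d
  obtain ⟨q, hq, hmq⟩ := hdm
  obtain ⟨p, hp, hmp⟩ := hL d hd0 m hm hdiv
  refine ⟨d, p, hp, q, hq, hd0, hmp, ?_⟩
  have h2 : d * ω p q = d * 1 := by
    have h3 := hmq
    rw [hmp] at h3
    simpa using h3
  exact mul_left_cancel₀ hd0 h2

/-- The elements of `L` orthogonal to both `p` and `q`. -/
def perp {V : Type} [AddCommGroup V] (ω : LinearMap.BilinForm ℤ V)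
    (L : Submodule ℤ V) (p q : V) : Submodule ℤ V :=
  L ⊓ (LinearMap.ker (ω p) ⊓ LinearMap.ker (ω q))

theorem mem_perp {V : Type} [AddCommGroup V] {ω : LinearMap.BilinForm ℤ V}
    {L : Submodule ℤ V} {p q x : V} :
    x ∈ perp ω L p q ↔ x ∈ L ∧ ω p x = 0 ∧ ω q x = 0 := by
  simp [perp]

theorem UnimodularOn.perp {V : Type} [AddCommGroup V] {ω : LinearMap.BilinForm ℤ V}
    (hω : ∀ x, ω x x = 0) {L : Submodule ℤ V} (hL : UnimodularOn ω L)
    {p q : V} (hp : p ∈ L) (hq : q ∈ L) (hpq : ω p q = 1) :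
    UnimodularOn ω (perp ω L p q) := by
  intro d hd x hx hdvd
  obtain ⟨hxL, hpx, hqx⟩ := mem_perp.1 hx
  have hqp : ω q p = -1 := by rw [alt_swap hω, hpq]
  have hxp : ω x p = 0 := by rw [alt_swap hω, hpx, neg_zero]
  have hxq : ω x q = 0 := by rw [alt_swap hω, hqx, neg_zero]
  obtain ⟨r, hr, hxr⟩ := hL d hd x hxL (by
    intro y hy
    have h1 := hdvd (y - ω p y • q + ω q y • p) (by
      rw [mem_perp]
      refine ⟨L.add_mem (L.sub_mem hy (L.smul_mem _ hq)) (L.smul_mem _ hp), ?_, ?_⟩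
      · simp [hpq, hω]
      · simp [hqp, hω])
    simpa [hxp, hxq] using h1)
  refine ⟨r, mem_perp.2 ⟨hr, ?_, ?_⟩, hxr⟩
  · have : d * ω p r = 0 := by rw [← hpx, hxr]; simp
    exact (mul_eq_zero.1 this).resolve_left hd
  · have : d * ω q r = 0 := by rw [← hqx, hxr]; simp
    exact (mul_eq_zero.1 this).resolve_left hd

/-- A symplectic basis of the orthogonal complement of a hyperbolic pair `p, q`, moved by the
Eichler transformation with parameters `s, t` and the transvection with parameter `k`
(both fix `p`), is together with `p` and the image of `q` a symplectic basis of `L`. -/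
theorem IsSympBasis.cons {V : Type} [AddCommGroup V] {ω : LinearMap.BilinForm ℤ V}
    (hω : ∀ x, ω x x = 0) {L : Submodule ℤ V} {p q : V} (hp : p ∈ L) (hq : q ∈ L)
    (hpq : ω p q = 1) {n : ℕ} {e f : Fin n → V} (h : IsSympBasis ω (perp ω L p q) e f)
    (s t : Fin n → ℤ) (k : ℤ) :
    IsSympBasis ω L (Fin.cons p fun i => e i + s i • p : Fin (n + 1) → V)
      (Fin.cons (q + ∑ i, (t i • e i - s i • f i) + k • p) fun i => f i + t i • p) := by
  have he := fun i => mem_perp.1 (h.mem_e i)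
  have hf := fun i => mem_perp.1 (h.mem_f i)
  have hqp : ω q p = -1 := by rw [alt_swap hω, hpq]
  have hpe : ∀ i, ω p (e i) = 0 := fun i => (he i).2.1
  have hqe : ∀ i, ω q (e i) = 0 := fun i => (he i).2.2
  have hpf : ∀ i, ω p (f i) = 0 := fun i => (hf i).2.1
  have hqf : ∀ i, ω q (f i) = 0 := fun i => (hf i).2.2
  have hep : ∀ i, ω (e i) p = 0 := fun i => by rw [alt_swap hω, hpe, neg_zero]
  have heq : ∀ i, ω (e i) q = 0 := fun i => by rw [alt_swap hω, hqe, neg_zero]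
  have hfp : ∀ i, ω (f i) p = 0 := fun i => by rw [alt_swap hω, hpf, neg_zero]
  have hfq : ∀ i, ω (f i) q = 0 := fun i => by rw [alt_swap hω, hqf, neg_zero]
  have hfe : ∀ i j, ω (f i) (e j) = if i = j then -1 else 0 := by
    intro i j
    rw [alt_swap hω, h.ef]
    by_cases hij : i = j
    · simp [hij]
    · simp [hij, Ne.symm hij]
  have key : ∀ j, ω (f j + t j • p) (q + ∑ i, (t i • e i - s i • f i) + k • p) = 0 := by
    intro j
    simp [hω, hpq, hpe, hpf, hfp, hfq, hfe, h.ff]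
  refine ⟨?_, ?_, ?_, ?_, ?_, ?_⟩
  · refine Fin.cases hp fun i => ?_
    exact L.add_mem (he i).1 (L.smul_mem _ hp)
  · refine Fin.cases ?_ fun i => ?_
    · exact L.add_mem (L.add_mem hq (L.sum_mem fun i _ =>
        L.sub_mem (L.smul_mem _ (he i).1) (L.smul_mem _ (hf i).1))) (L.smul_mem _ hp)
    · exact L.add_mem (hf i).1 (L.smul_mem _ hp)
  · refine Fin.cases ?_ fun i => ?_ <;> refine Fin.cases ?_ fun j => ?_ <;>
      simp [hω, hpe, hep, h.ee]
  · refine Fin.cases ?_ fun i => ?_ <;> refine Fin.cases ?_ fun j => ?_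
    · exact hω _
    · rw [alt_swap hω]
      simp only [Fin.cons_zero, Fin.cons_succ, key, neg_zero]
    · simp only [Fin.cons_zero, Fin.cons_succ, key]
    · simp [hω, hpf, hfp, h.ff]
  · refine Fin.cases ?_ fun i => ?_ <;> refine Fin.cases ?_ fun j => ?_
    · simp [hω, hpe, hpf, hpq]
    · simp [hω, hpf, (Fin.succ_ne_zero j).symm]
    · simp [hω, hpe, hpf, hpq, hep, heq, h.ee, h.ef]
    · simp [hω, hpf, hep, h.ef]
  · intro y hy h1 h2
    have hpy : ω p y = 0 := by simpa using h1 0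
    have hey : ∀ i, ω (e i) y = 0 := fun i => by simpa [hpy] using h1 i.succ
    have hfy : ∀ i, ω (f i) y = 0 := fun i => by simpa [hpy] using h2 i.succ
    have hqy : ω q y = 0 := by simpa [hpy, hey, hfy] using h2 0
    exact h.total y (mem_perp.2 ⟨hy, hpy, hqy⟩) hey hfy

/-! ### Symplectic bases adapted to a family of vectors -/

/-- Let `x` be a family in a unimodular lattice `L`, with at most `2n` nonzero members, such that
only `0` in `L` is orthogonal to all of them. In a suitable symplectic basis of `L` the coordinates
of the family are polynomially bounded in the entries of its Gram matrix, with constants depending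
on `n` only. Vectors of the family may vanish, which lets the index type stay fixed while `n`
decreases in the induction. -/
theorem exists_bounded_basis {V : Type} [AddCommGroup V] (ω : LinearMap.BilinForm ℤ V)
    (hω : ∀ x, ω x x = 0) {ι : Type} [DecidableEq ι] (n : ℕ) :
    ∃ C k : ℕ, ∀ (L : Submodule ℤ V), UnimodularOn ω L → ∀ (x : ι → V) (s : Finset ι) (H : ℤ),
      (∀ i, x i ∈ L) → (∀ i ∉ s, x i = 0) → s.card ≤ 2 * n →
      1 ≤ H → (∀ i j, |ω (x i) (x j)| ≤ H) →
      (∀ y ∈ L, (∀ i, ω y (x i) = 0) → y = 0) →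
      ∃ n' ≤ n, ∃ e f : Fin n' → V, IsSympBasis ω L e f ∧
        ∀ i j, |ω (e i) (x j)| ≤ C * H ^ k ∧ |ω (f i) (x j)| ≤ C * H ^ k := by
  induction n with
  | zero =>
    refine ⟨0, 0, ?_⟩
    intro L _ x s H _ hs hcard _ _ htot
    have hs0 : s = ∅ := by simpa using hcard
    refine ⟨0, le_rfl, Fin.elim0, Fin.elim0, ⟨fun i => i.elim0, fun i => i.elim0,
      fun i => i.elim0, fun i => i.elim0, fun i => i.elim0, ?_⟩, fun i => i.elim0⟩
    intro y hy _ _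
    exact htot y hy fun i => by rw [hs i (by simp [hs0]), map_zero]
  | succ n ih =>
    obtain ⟨C, k, ih⟩ := ih
    refine ⟨(2 * n + 1) * (C * 3 ^ k) + 2, 3 * k + 2, ?_⟩
    intro L hL x s H hxL hs hcard hH hG htot
    by_cases hx0 : ∀ i, x i = 0
    · refine ⟨0, Nat.zero_le _, Fin.elim0, Fin.elim0, ⟨fun i => i.elim0, fun i => i.elim0,
        fun i => i.elim0, fun i => i.elim0, fun i => i.elim0, ?_⟩, fun i => i.elim0⟩
      intro y hy _ _
      exact htot y hy fun i => by rw [hx0, map_zero]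
    push Not at hx0
    obtain ⟨a, ha⟩ := hx0
    obtain ⟨b, hab⟩ : ∃ b, ω (x a) (x b) ≠ 0 := by
      by_contra! hcon
      exact ha (htot _ (hxL a) hcon)
    obtain ⟨d, p, hp, q, hq, hd, hxa, hpq⟩ := hL.exists_hyperbolic (hxL a) (hxL b) hab
    have hqp : ω q p = -1 := by rw [alt_swap hω, hpq]
    set c₀ := ω (x a) (x b) with hc₀
    set c := ω p (x b) with hc
    have hdc : c₀ = d * c := by rw [hc₀, hxa]; simp [hc]
    have hc0 : c ≠ 0 := by rintro h; apply hab; rw [hdc, h, mul_zero]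
    have hc₀1 : 1 ≤ |c₀| := Int.one_le_abs hab
    have hd1 : 1 ≤ |d| := Int.one_le_abs hd
    have hc1 : 1 ≤ |c| := Int.one_le_abs hc0
    have hdcH : |d| * |c| ≤ H := by
      rw [← abs_mul, ← hdc]; exact hG a b
    have hdH : |d| ≤ H := by nlinarith
    have hcH : |c| ≤ H := by nlinarith
    have hba : ω (x b) (x a) = -c₀ := by rw [hc₀, alt_swap hω]
    -- `y i` is `c₀` times the projection of `x i` to the complement of `x a, x b`
    obtain ⟨y, hy⟩ : ∃ y : ι → V, ∀ i, y i =
        c₀ • x i - ω (x a) (x i) • x b + ω (x b) (x i) • x a := ⟨_, fun _ => rfl⟩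
    have hyL : ∀ i, y i ∈ L := fun i => by
      rw [hy]
      exact L.add_mem (L.sub_mem (L.smul_mem _ (hxL i)) (L.smul_mem _ (hxL b)))
        (L.smul_mem _ (hxL a))
    have hay : ∀ i, ω (x a) (y i) = 0 := fun i => by
      rw [hy]; simp [hω, ← hc₀]; ring
    have hby : ∀ i, ω (x b) (y i) = 0 := fun i => by
      rw [hy]; simp [hω, hba]; ring
    have hpy : ∀ i, ω p (y i) = 0 := fun i => by
      have h := hay i
      rw [hxa] at h
      simpa [hd] using h
    have hyp : ∀ i, ω (y i) p = 0 := fun i => by rw [alt_swap hω, hpy, neg_zero]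
    have hyb : ∀ i, ω (y i) (x b) = 0 := fun i => by rw [alt_swap hω, hby, neg_zero]
    have hya : ∀ i, ω (y i) (x a) = 0 := fun i => by rw [alt_swap hω, hay, neg_zero]
    -- `z i` is the projection of `y i` to the complement of `p, q`
    obtain ⟨z, hz⟩ : ∃ z : ι → V, ∀ i, z i = y i + ω q (y i) • p := ⟨_, fun _ => rfl⟩
    have hωz : ∀ v, ω p v = 0 → ∀ i, ω v (z i) = ω v (y i) := fun v hv i => by
      have hvp : ω v p = 0 := by rw [alt_swap hω, hv, neg_zero]
      rw [hz]; simp [hvp]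
    have hzz : ∀ i j, ω (z i) (z j) = ω (y i) (y j) := fun i j => by
      rw [hz, hz]; simp [hω, hpy, hyp]
    have hyy : ∀ i j, ω (y i) (y j) = c₀ * (c₀ * ω (x i) (x j) -
        ω (x a) (x i) * ω (x b) (x j) + ω (x b) (x i) * ω (x a) (x j)) := fun i j => by
      have h : ω (y i) (y j) = c₀ * ω (y i) (x j) := by
        rw [hy j]; simp [hya, hyb]
      rw [h, hy i]; simp
    have hH0 : 0 ≤ H := by linarith
    have hGz : ∀ i j, |ω (z i) (z j)| ≤ 3 * H ^ 3 := fun i j => by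
      rw [hzz, hyy, abs_mul]
      have h1 : |c₀ * ω (x i) (x j)| ≤ H * H := by
        rw [abs_mul]; exact mul_le_mul (hG a b) (hG i j) (abs_nonneg _) hH0
      have h2 : |ω (x a) (x i) * ω (x b) (x j)| ≤ H * H := by
        rw [abs_mul]; exact mul_le_mul (hG _ _) (hG _ _) (abs_nonneg _) hH0
      have h3 : |ω (x b) (x i) * ω (x a) (x j)| ≤ H * H := by
        rw [abs_mul]; exact mul_le_mul (hG _ _) (hG _ _) (abs_nonneg _) hH0
      have h4 : |c₀ * ω (x i) (x j) -
        ω (x a) (x i) * ω (x b) (x j) + ω (x b) (x i) * ω (x a) (x j)| ≤ 3 * (H * H) := by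
        rw [abs_le] at *
        constructor <;> linarith [h1.1, h1.2, h2.1, h2.2, h3.1, h3.2]
      calc _ ≤ H * (3 * (H * H)) := mul_le_mul (hG a b) h4 (abs_nonneg _) hH0
        _ = 3 * H ^ 3 := by ring
    have hne : a ≠ b := by
      rintro rfl
      exact hab (hω _)
    have has : a ∈ s := by
      by_contra h
      exact ha (hs a h)
    have hbs : b ∈ s := by
      by_contra h
      apply hab
      rw [hc₀, hs b h, map_zero]
    obtain ⟨n', hn', e, f, hef, hbd⟩ := ih (perp ω L p q) (hL.perp hω hp hq hpq) z
      ((s.erase a).erase b) (3 * H ^ 3)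
      (fun i => mem_perp.2 ⟨by rw [hz]; exact L.add_mem (hyL i) (L.smul_mem _ hp),
        by rw [hz]; simp [hω, hpy], by rw [hz]; simp [hqp]⟩)
      (by
        intro i hi
        have hy0 : y i = 0 := by
          by_cases hib : i = b
          · rw [hib, hy]; simp [hω, ← hc₀]
          by_cases hia : i = a
          · rw [hia, hy]; simp [hω, hba]
          have : x i = 0 := hs i (by simpa [hib, hia] using hi)
          rw [hy]; simp [this]
        rw [hz, hy0]; simp)
      (by
        rw [Finset.card_erase_of_mem (Finset.mem_erase.2 ⟨hne.symm, hbs⟩),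
          Finset.card_erase_of_mem has]
        omega)
      (by nlinarith [one_le_pow₀ hH (n := 3)])
      hGz
      (by
        intro v hv hvz
        obtain ⟨hvL, hpv, hqv⟩ := mem_perp.1 hv
        have hvy : ∀ i, ω v (y i) = 0 := fun i => by rw [← hωz v hpv, hvz]
        have hva : ω v (x a) = 0 := by
          rw [alt_swap hω, hxa]; simp [hpv]
        have hvx : ∀ i, c₀ * ω v (x i) = ω (x a) (x i) * ω v (x b) := fun i => by
          have h := hvy i
          rw [hy] at h
          simp [hva] at h
          linarith
        have h0 : c₀ • v - ω v (x b) • x a = 0 := by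
          apply htot
          · exact L.sub_mem (L.smul_mem _ hvL) (L.smul_mem _ (hxL a))
          · intro i
            simp [hvx i]; ring
        have hvb : ω v (x b) = 0 := by
          have h1 := congrArg (ω q) h0
          rw [hxa] at h1
          simpa [hqv, hqp, hd] using h1
        apply htot v hvL
        intro i
        have := hvx i
        rw [hvb, mul_zero] at this
        exact (mul_eq_zero.1 this).resolve_left hab)
    have hpe : ∀ i, ω p (e i) = 0 := fun i => (mem_perp.1 (hef.mem_e i)).2.1
    have hpf : ∀ i, ω p (f i) = 0 := fun i => (mem_perp.1 (hef.mem_f i)).2.1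
    -- parameters of the automorphism fixing `p` that reduces the pairings with `x b` modulo `c`
    choose σ hσ using fun i => exists_shift (ω (e i) (x b)) c hc0
    choose τ hτ using fun i => exists_shift (ω (f i) (x b)) c hc0
    obtain ⟨κ, hκ⟩ := exists_shift (ω (q + ∑ i, (τ i • e i - σ i • f i)) (x b)) c hc0
    have hB := hef.cons hω hp hq hpq σ τ κ
    set q' := q + ∑ i, (τ i • e i - σ i • f i) + κ • p with hq'
    set B : ℤ := C * (3 * H ^ 3) ^ k with hBdef
    have hB0 : 0 ≤ B := by positivity
    have hpxa : ω p (x a) = 0 := by rw [hxa]; simp [hω]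
    have heb : ∀ i, |ω (e i + σ i • p) (x b)| ≤ H := fun i => by
      simpa [← hc] using (hσ i).trans hcH
    have hfb : ∀ i, |ω (f i + τ i • p) (x b)| ≤ H := fun i => by
      simpa [← hc] using (hτ i).trans hcH
    have hqb : |ω q' (x b)| ≤ H := by
      rw [hq', map_add, LinearMap.add_apply]
      simpa [← hc] using hκ.trans hcH
    have hea : ∀ i, ω (e i + σ i • p) (x a) = 0 := fun i => by
      rw [alt_swap hω, hxa]; simp [hω, hpe]
    have hfa : ∀ i, ω (f i + τ i • p) (x a) = 0 := fun i => by
      rw [alt_swap hω, hxa]; simp [hω, hpf]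
    have hpq' : ω p q' = 1 := by
      simpa using hB.ef 0 0
    have hqa : |ω q' (x a)| ≤ H := by
      rw [alt_swap hω, hxa]; simpa [hpq'] using hdH
    have hey : ∀ i j, |ω (e i + σ i • p) (y j)| ≤ B := fun i j => by
      have := (hbd i j).1
      rw [hωz _ (hpe i)] at this
      simpa [hpy] using this
    have hfy : ∀ i j, |ω (f i + τ i • p) (y j)| ≤ B := fun i j => by
      have := (hbd i j).2
      rw [hωz _ (hpf i)] at this
      simpa [hpy] using this
    -- orthogonality of `x b` and `y j`, expanded in the new basis, determines `ω q' (y j)`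
    have hqy : ∀ j, |ω q' (y j)| ≤ 2 * n * H * B := fun j => by
      have h := hB.parseval hω (hxL b) (y j)
      rw [hby, Fin.sum_univ_succ] at h
      simp only [Fin.cons_zero, Fin.cons_succ, hpy, mul_zero, sub_zero] at h
      have hterm : ∀ i, |ω (e i + σ i • p) (x b) * ω (f i + τ i • p) (y j) -
          ω (f i + τ i • p) (x b) * ω (e i + σ i • p) (y j)| ≤ 2 * (H * B) := fun i => by
        refine (abs_sub _ _).trans ?_
        rw [abs_mul, abs_mul]
        have h1 := mul_le_mul (heb i) (hfy i j) (abs_nonneg _) hH0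
        have h2 := mul_le_mul (hfb i) (hey i j) (abs_nonneg _) hH0
        linarith
      have hsum := (Finset.abs_sum_le_sum_abs (fun i => ω (e i + σ i • p) (x b) *
          ω (f i + τ i • p) (y j) - ω (f i + τ i • p) (x b) * ω (e i + σ i • p) (y j))
          Finset.univ).trans (Finset.sum_le_sum fun i _ => hterm i)
      have hcq : |c| * |ω q' (y j)| ≤ n' * (2 * (H * B)) := by
        have h6 : c * ω q' (y j) = -∑ i, (ω (e i + σ i • p) (x b) * ω (f i + τ i • p) (y j) -
            ω (f i + τ i • p) (x b) * ω (e i + σ i • p) (y j)) := by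
          rw [hc]; linarith
        rw [← abs_mul, h6, abs_neg]
        simpa using hsum
      have hn'' : (n' : ℤ) ≤ n := by exact_mod_cast hn'
      have h7 : (n' : ℤ) * (2 * (H * B)) ≤ n * (2 * (H * B)) :=
        mul_le_mul_of_nonneg_right hn'' (by positivity)
      have h8 : |ω q' (y j)| ≤ |c| * |ω q' (y j)| := le_mul_of_one_le_left (abs_nonneg _) hc1
      linarith
    have hn0 : (0 : ℤ) ≤ n := by positivity
    -- a bound for pairings with `x j` from those with `y j`, `x a` and `x b`
    have hfin : ∀ v, |ω v (x a)| ≤ H → |ω v (x b)| ≤ H →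
        (∀ j, |ω v (y j)| ≤ (2 * n + 1) * H * B) → ∀ j, |ω v (x j)| ≤
          ((2 * n + 1) * (C * 3 ^ k) + 2 : ℕ) * H ^ (3 * k + 2) := by
      intro v h1 h2 h3 j
      have h4 : c₀ * ω v (x j) = ω v (y j) + ω (x a) (x j) * ω v (x b) -
          ω (x b) (x j) * ω v (x a) := by
        rw [hy]; simp; ring
      have h5 : |ω (x a) (x j) * ω v (x b)| ≤ H * H := by
        rw [abs_mul]; exact mul_le_mul (hG _ _) h2 (abs_nonneg _) hH0
      have h6 : |ω (x b) (x j) * ω v (x a)| ≤ H * H := by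
        rw [abs_mul]; exact mul_le_mul (hG _ _) h1 (abs_nonneg _) hH0
      have h7 : |c₀ * ω v (x j)| ≤ (2 * n + 1) * H * B + 2 * (H * H) := by
        rw [h4]
        have h3 := h3 j
        rw [abs_le] at *
        constructor <;> linarith [h3.1, h3.2, h5.1, h5.2, h6.1, h6.2]
      rw [abs_mul] at h7
      have h8 : |ω v (x j)| ≤ |c₀| * |ω v (x j)| := le_mul_of_one_le_left (abs_nonneg _) hc₀1
      refine h8.trans (h7.trans ?_)
      have h9 : H ^ (3 * k + 1) ≤ H ^ (3 * k + 2) := pow_le_pow_right₀ hH (by omega)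
      have h10 : H ^ 2 ≤ H ^ (3 * k + 2) := pow_le_pow_right₀ hH (by omega)
      have h11 : (2 * n + 1) * H * B = (2 * n + 1) * (C * 3 ^ k) * H ^ (3 * k + 1) := by
        rw [hBdef]; ring
      rw [h11]
      have h12 : (0 : ℤ) ≤ (2 * n + 1) * (C * 3 ^ k) := by positivity
      have h13 := mul_le_mul_of_nonneg_left h9 h12
      push_cast
      linarith
    have hHB : 0 ≤ H * B := by positivity
    have hB1 : B ≤ (2 * n + 1) * H * B := by
      have h1 : B ≤ H * B := le_mul_of_one_le_left hB0 hH
      have h2 : 0 ≤ n * (H * B) := by positivity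
      linarith
    refine ⟨n' + 1, by omega, _, _, hB, ?_⟩
    refine Fin.cases ?_ fun i => ?_
    · intro j
      simp only [Fin.cons_zero]
      refine ⟨hfin p ?_ hcH ?_ j, hfin q' hqa hqb ?_ j⟩
      · rw [hpxa]; simpa using hH0
      · intro j; rw [hpy]; simp only [abs_zero]; exact hB0.trans hB1
      · intro j; refine (hqy j).trans ?_; linarith
    · intro j
      simp only [Fin.cons_succ]
      refine ⟨hfin _ ?_ (heb i) (fun j => (hey i j).trans hB1) j,
        hfin _ ?_ (hfb i) (fun j => (hfy i j).trans hB1) j⟩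
      · rw [hea]; simpa using hH0
      · rw [hfa]; simpa using hH0

/-! ### The standard symplectic lattice -/

theorem Jsymp_mul_self (g : ℕ) : Jsymp g * Jsymp g = -1 := by
  simp [Jsymp, Matrix.fromBlocks_multiply, ← Matrix.fromBlocks_one, Matrix.fromBlocks_neg]

theorem Jsymp_transpose (g : ℕ) : (Jsymp g)ᵀ = -Jsymp g := by
  simp [Jsymp, Matrix.fromBlocks_transpose, Matrix.fromBlocks_neg]

/-- The bilinear form with matrix `Jsymp g`. -/
def sympForm (g : ℕ) : LinearMap.BilinForm ℤ (Fin g ⊕ Fin g → ℤ) :=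
  Matrix.toBilin' (Jsymp g)

theorem sympForm_apply (g : ℕ) (x y : Fin g ⊕ Fin g → ℤ) :
    sympForm g x y = x ⬝ᵥ (Jsymp g *ᵥ y) :=
  Matrix.toBilin'_apply' _ _ _

theorem sympForm_self (g : ℕ) (x : Fin g ⊕ Fin g → ℤ) : sympForm g x x = 0 := by
  have h : sympForm g x x = -sympForm g x x := by
    conv_lhs => rw [sympForm_apply, Matrix.dotProduct_mulVec, ← Matrix.mulVec_transpose,
      Jsymp_transpose, dotProduct_comm]
    rw [sympForm_apply, Matrix.neg_mulVec, dotProduct_neg]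
  omega

theorem mul_Jsymp_mul_apply (g : ℕ) (A B : Matrix (Fin g ⊕ Fin g) (Fin g ⊕ Fin g) ℤ)
    (i j : Fin g ⊕ Fin g) :
    (Aᵀ * Jsymp g * B) i j = sympForm g (Aᵀ i) (Bᵀ j) := by
  rw [sympForm_apply, Matrix.mul_assoc]
  rfl

theorem unimodularOn_top (g : ℕ) : UnimodularOn (sympForm g) ⊤ := by
  intro d _ x _ hdvd
  have h : ∀ i, d ∣ x i := by
    intro i
    -- the coordinate `x i` is the pairing of `x` with `-J` applied to the `i`-th unit vector
    have h1 := hdvd (-(Jsymp g *ᵥ Pi.single i 1)) trivial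
    rw [sympForm_apply, Matrix.mulVec_neg, Matrix.mulVec_mulVec, Jsymp_mul_self,
      Matrix.neg_mulVec, neg_neg, Matrix.one_mulVec, dotProduct_single, mul_one] at h1
    exact h1
  choose r hr using h
  exact ⟨r, trivial, funext fun i => by simp [hr i]⟩

/-- A symplectic basis of `ℤ ^ (2g)` has at least `2g` elements, since pairing with its members
is an injective map. -/
theorem le_of_isSympBasis {g n : ℕ} {e f : Fin n → Fin g ⊕ Fin g → ℤ}
    (h : IsSympBasis (sympForm g) ⊤ e f) : g ≤ n := by
  let φ : (Fin g ⊕ Fin g → ℤ) →ₗ[ℤ] (Fin n ⊕ Fin n → ℤ) :=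
    LinearMap.pi (Sum.elim (fun i => sympForm g (e i)) (fun i => sympForm g (f i)))
  have hφ : Function.Injective φ := by
    rw [← LinearMap.ker_eq_bot, LinearMap.ker_eq_bot']
    intro y hy
    exact h.total y trivial (fun i => congrFun hy (Sum.inl i)) (fun i => congrFun hy (Sum.inr i))
  have := LinearMap.finrank_le_finrank_of_injective hφ
  simp at this
  omega

/-- There are constants `C, κ > 0`, depending only on `g`, such that every integer
matrix `M` of size `2g` with nonzero determinant factors as `M = S * P` with `S`
symplectic and the entries of `P` of affine height at most `C · max(1,H)^κ`, where
`H` is the maximum of the affine heights of the entries of `Mᵗ J M`. -/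
theorem stmt1 (g : ℕ) (hg : 0 < g) :
    ∃ C κ : ℝ, 0 < C ∧ 0 < κ ∧
      ∀ M : Matrix (Fin g ⊕ Fin g) (Fin g ⊕ Fin g) ℤ, M.det ≠ 0 →
        ∃ S P : Matrix (Fin g ⊕ Fin g) (Fin g ⊕ Fin g) ℤ,
          Sᵀ * Jsymp g * S = Jsymp g ∧
          M = S * P ∧
          ∀ i j, (max 1 |P i j| : ℝ) ≤
            C * (max 1 (((Finset.univ.sup fun p : (Fin g ⊕ Fin g) × (Fin g ⊕ Fin g) =>
              ((Mᵀ * Jsymp g * M) p.1 p.2).natAbs : ℕ) : ℕ) : ℝ)) ^ κ := by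
  obtain ⟨C, k, hCk⟩ := exists_bounded_basis (ι := Fin g ⊕ Fin g) (sympForm g)
    (sympForm_self g) g
  refine ⟨C + 1, (k + 1 : ℕ), by positivity, by positivity, ?_⟩
  intro M hM
  set N : ℕ := Finset.univ.sup fun p : (Fin g ⊕ Fin g) × (Fin g ⊕ Fin g) =>
    ((Mᵀ * Jsymp g * M) p.1 p.2).natAbs with hN
  set H : ℤ := max 1 (N : ℤ) with hH
  have hH1 : 1 ≤ H := le_max_left _ _
  have hgram : ∀ i j, |sympForm g (Mᵀ i) (Mᵀ j)| ≤ H := by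
    intro i j
    rw [← mul_Jsymp_mul_apply, Int.abs_eq_natAbs]
    refine le_trans ?_ (le_max_right _ _)
    exact_mod_cast Finset.le_sup (f := fun p : (Fin g ⊕ Fin g) × (Fin g ⊕ Fin g) =>
      ((Mᵀ * Jsymp g * M) p.1 p.2).natAbs) (Finset.mem_univ (i, j))
  obtain ⟨n, hn, e, f, hef, hbd⟩ := hCk ⊤ (unimodularOn_top g) (fun j => Mᵀ j) Finset.univ H
    (fun _ => trivial) (fun i hi => absurd (Finset.mem_univ i) hi)
    (by simp [two_mul]) hH1 hgram
    (by
      intro y _ hy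
      have h1 : (y ᵥ* Jsymp g) ᵥ* M = 0 := by
        funext j
        have := hy j
        rw [sympForm_apply, Matrix.dotProduct_mulVec] at this
        exact this
      have h2 : y ᵥ* Jsymp g = 0 := Matrix.eq_zero_of_vecMul_eq_zero hM h1
      have h3 : (y ᵥ* Jsymp g) ᵥ* Jsymp g = 0 := by rw [h2, Matrix.zero_vecMul]
      simpa [Matrix.vecMul_vecMul, Jsymp_mul_self, Matrix.vecMul_neg] using h3)
  obtain rfl : n = g := le_antisymm hn (le_of_isSympBasis hef)
  -- the matrix whose columns form the symplectic basis
  obtain ⟨S, hSe, hSf⟩ : ∃ S : Matrix (Fin n ⊕ Fin n) (Fin n ⊕ Fin n) ℤ,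
      (∀ i, Sᵀ (Sum.inl i) = e i) ∧ ∀ i, Sᵀ (Sum.inr i) = f i :=
    ⟨(Matrix.of (Sum.elim e f))ᵀ, fun _ => rfl, fun _ => rfl⟩
  have hS : Sᵀ * Jsymp n * S = Jsymp n := by
    ext i j
    rw [mul_Jsymp_mul_apply]
    rcases i with i | i <;> rcases j with j | j
    · simp [hSe, hef.ee, Jsymp]
    · simp [hSe, hSf, hef.ef, Jsymp, Matrix.one_apply]
    · rw [alt_swap (sympForm_self n)]
      simp [hSe, hSf, hef.ef, Jsymp, Matrix.one_apply, eq_comm]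
    · simp [hSf, hef.ff, Jsymp]
  have hinv : S * (-(Jsymp n * (Sᵀ * Jsymp n))) = 1 := by
    rw [mul_eq_one_comm, Matrix.neg_mul, Matrix.mul_assoc, hS, Jsymp_mul_self, neg_neg]
  refine ⟨S, -(Jsymp n * (Sᵀ * Jsymp n)) * M, hS, ?_, ?_⟩
  · rw [← Matrix.mul_assoc, hinv, Matrix.one_mul]
  intro i j
  have hP : |(-(Jsymp n * (Sᵀ * Jsymp n)) * M) i j| ≤ C * H ^ k := by
    have h1 : -(Jsymp n * (Sᵀ * Jsymp n)) * M = -(Jsymp n * (Sᵀ * Jsymp n * M)) := by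
      rw [Matrix.neg_mul, Matrix.mul_assoc]
    rw [h1, Matrix.neg_apply, abs_neg, Matrix.mul_apply, Fintype.sum_sum_type]
    simp only [mul_Jsymp_mul_apply, hSe, hSf]
    rcases i with i | i
    · simpa [Jsymp, Matrix.one_apply] using (hbd i j).2
    · simpa [Jsymp, Matrix.one_apply] using (hbd i j).1
  have hpow : (1 : ℤ) ≤ H ^ k := one_le_pow₀ hH1
  have hfin : max 1 |(-(Jsymp n * (Sᵀ * Jsymp n)) * M) i j| ≤ (C + 1) * H ^ (k + 1) := by
    have hle : H ^ k ≤ H ^ (k + 1) := pow_le_pow_right₀ hH1 (by omega)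
    have hC : (0 : ℤ) ≤ C := by positivity
    have h2 := mul_le_mul_of_nonneg_left hle hC
    have h3 : 0 ≤ C * H ^ k := by positivity
    rw [max_le_iff]
    constructor <;> linarith
  have hHR : (max 1 (N : ℝ)) = ((H : ℤ) : ℝ) := by
    rw [hH]; push_cast; rfl
  rw [hHR, Real.rpow_natCast]
  exact_mod_cast hfin
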